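/- Let ω : A × B → k be a non-degenerate Hopf pairing between Hopf algebras over a field k with inverse copairing Σ_i b_i ⊗ a_i and bijective antipodes, and let ω⁻ : B × A → k be the Hopf pairing ω⁻(b, a) = ω(S_A⁻¹(a), S_B⁻¹(b)), with inverse copairing Σ_i S_A(a_i) ⊗ S_B(b_i). Let (X, ρ, δ) be a left Yetter–Drinfel'd module over A. Then applying the construction Ω for ω (giving a left Yetter–Drinfel'd module over B) followed by the analogous construction for ω⁻ yields the left A-Yetter–Drinfel'd module (X, ρ ∘ (S_A⁻² ⊗ id), (S_A² ⊗ id) ∘ δ), i.e. with action a ·' x = S_A⁻²(a)·x and coaction x ↦ S_A²(x_{(-1)}) ⊗ x_{(0)}; moreover θ_X(x) := S_A(x_{(-1)})·x_{(0)} is a bijection X → X which is an isomorphism of left A-Yetter–Drinfel'd modules from this twisted module to the original (X, ρ, δ). -/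

import Mathlib

open TensorProduct

noncomputable section

variable {k : Type*} [Field k]
variable {A : Type*} [Ring A] [HopfAlgebra k A]
variable {X Y Z : Type*} [AddCommGroup X] [Module k X] [AddCommGroup Y] [Module k Y]
  [AddCommGroup Z] [Module k Z]

/-- LHS of the left Yetter–Drinfel'd compatibility condition, as a linear map
`A ⊗ X → A ⊗ X` sending `h ⊗ x` to `h₍₁₎x₍₋₁₎ ⊗ h₍₂₎ · x₍₀₎`. -/
def ydL (act : A ⊗[k] X →ₗ[k] X) (coact : X →ₗ[k] A ⊗[k] X) :
    A ⊗[k] X →ₗ[k] A ⊗[k] X :=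
  TensorProduct.map (LinearMap.mul' k A) act
    ∘ₗ (TensorProduct.tensorTensorTensorComm k A A A X).toLinearMap
    ∘ₗ TensorProduct.map (Coalgebra.comul (R := k)) coact

/-- RHS of the left Yetter–Drinfel'd compatibility condition, sending `h ⊗ x` to
`(h₍₁₎·x)₍₋₁₎ h₍₂₎ ⊗ (h₍₁₎·x)₍₀₎`. -/
def ydR (act : A ⊗[k] X →ₗ[k] X) (coact : X →ₗ[k] A ⊗[k] X) :
    A ⊗[k] X →ₗ[k] A ⊗[k] X :=
  TensorProduct.map (LinearMap.mul' k A) LinearMap.id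
    ∘ₗ (TensorProduct.assoc k A A X).symm.toLinearMap
    ∘ₗ LinearMap.lTensor A (TensorProduct.comm k X A).toLinearMap
    ∘ₗ (TensorProduct.assoc k A X A).toLinearMap
    ∘ₗ LinearMap.rTensor A coact
    ∘ₗ LinearMap.rTensor A act
    ∘ₗ (TensorProduct.assoc k A X A).symm.toLinearMap
    ∘ₗ LinearMap.lTensor A (TensorProduct.comm k A X).toLinearMap
    ∘ₗ (TensorProduct.assoc k A A X).toLinearMap
    ∘ₗ LinearMap.rTensor X (Coalgebra.comul (R := k))

/-- A left Yetter–Drinfel'd module structure over the Hopf algebra `A` on the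
vector space `X`: a left action, a left coaction, and the compatibility. -/
structure IsYD (act : A ⊗[k] X →ₗ[k] X) (coact : X →ₗ[k] A ⊗[k] X) : Prop where
  act_one : ∀ x : X, act (1 ⊗ₜ[k] x) = x
  act_mul : ∀ (a a' : A) (x : X),
    act ((a * a') ⊗ₜ[k] x) = act (a ⊗ₜ[k] act (a' ⊗ₜ[k] x))
  coassoc : (TensorProduct.assoc k A A X).toLinearMap
      ∘ₗ LinearMap.rTensor X (Coalgebra.comul (R := k)) ∘ₗ coact
      = LinearMap.lTensor A coact ∘ₗ coact
  counit_coact : (TensorProduct.lid k X).toLinearMap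
      ∘ₗ LinearMap.rTensor X (Coalgebra.counit (R := k)) ∘ₗ coact = LinearMap.id
  yd : ydL act coact = ydR act coact

/-- The diagonal action `h · (x ⊗ y) = h₍₁₎·x ⊗ h₍₂₎·y` on a tensor product. -/
def tAct (actX : A ⊗[k] X →ₗ[k] X) (actY : A ⊗[k] Y →ₗ[k] Y) :
    A ⊗[k] (X ⊗[k] Y) →ₗ[k] X ⊗[k] Y :=
  TensorProduct.map actX actY
    ∘ₗ (TensorProduct.tensorTensorTensorComm k A A X Y).toLinearMap
    ∘ₗ LinearMap.rTensor (X ⊗[k] Y) (Coalgebra.comul (R := k))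

/-- The codiagonal coaction `x ⊗ y ↦ x₍₋₁₎y₍₋₁₎ ⊗ (x₍₀₎ ⊗ y₍₀₎)` on a tensor product. -/
def tCoact (coactX : X →ₗ[k] A ⊗[k] X) (coactY : Y →ₗ[k] A ⊗[k] Y) :
    X ⊗[k] Y →ₗ[k] A ⊗[k] (X ⊗[k] Y) :=
  LinearMap.rTensor (X ⊗[k] Y) (LinearMap.mul' k A)
    ∘ₗ (TensorProduct.tensorTensorTensorComm k A X A Y).toLinearMap
    ∘ₗ TensorProduct.map coactX coactY

/-- The Yetter–Drinfel'd braiding `c_{X,Y} : x ⊗ y ↦ x₍₋₁₎ · y ⊗ x₍₀₎`. -/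
def ydBraid (coactX : X →ₗ[k] A ⊗[k] X) (actY : A ⊗[k] Y →ₗ[k] Y) :
    X ⊗[k] Y →ₗ[k] Y ⊗[k] X :=
  LinearMap.rTensor X actY
    ∘ₗ (TensorProduct.assoc k A Y X).symm.toLinearMap
    ∘ₗ LinearMap.lTensor A (TensorProduct.comm k X Y).toLinearMap
    ∘ₗ (TensorProduct.assoc k A X Y).toLinearMap
    ∘ₗ LinearMap.rTensor Y coactX

/-- The map `θ_X : x ↦ S(x₍₋₁₎) · x₍₀₎`. -/
def ydTheta (act : A ⊗[k] X →ₗ[k] X) (coact : X →ₗ[k] A ⊗[k] X) : X →ₗ[k] X :=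
  act ∘ₗ LinearMap.rTensor X (HopfAlgebra.antipode (R := k)) ∘ₗ coact

section Pairing

variable {B : Type*} [Ring B] [HopfAlgebra k B]

/-- A Hopf pairing between the Hopf algebras `A` and `B` over the field `k`. -/
structure IsHopfPairing (ω : A →ₗ[k] B →ₗ[k] k) : Prop where
  mul_left : ∀ (a a' : A) (b : B),
    ω (a * a') b =
      (LinearMap.mul' k k ∘ₗ TensorProduct.map (ω a') (ω a)) (Coalgebra.comul (R := k) b)
  one_left : ∀ b : B, ω 1 b = Coalgebra.counit (R := k) b
  mul_right : ∀ (a : A) (b b' : B),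
    ω a (b * b') =
      (LinearMap.mul' k k ∘ₗ TensorProduct.map (ω.flip b') (ω.flip b)) (Coalgebra.comul (R := k) a)
  one_right : ∀ a : A, ω a 1 = Coalgebra.counit (R := k) a

/-- Non-degeneracy of a pairing, witnessed by an inverse copairing `Σᵢ bᵢ ⊗ aᵢ`. -/
def IsInverseCopairing (ω : A →ₗ[k] B →ₗ[k] k) {n : ℕ} (b : Fin n → B) (a : Fin n → A) :
    Prop :=
  (∀ x : A, ∑ i, ω x (b i) • a i = x) ∧ (∀ y : B, ∑ i, ω (a i) y • b i = y)

/-- The left `B`-action `b · x := ω(x₍₋₁₎, S_B⁻²(b)) x₍₀₎` of the functor `Ω`. -/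
def omegaAct (ω : A →ₗ[k] B →ₗ[k] k) (SB' : B →ₗ[k] B) (coact : X →ₗ[k] A ⊗[k] X) :
    B ⊗[k] X →ₗ[k] X :=
  (TensorProduct.lid k X).toLinearMap
    ∘ₗ LinearMap.rTensor X (TensorProduct.lift ω)
    ∘ₗ LinearMap.rTensor X (TensorProduct.comm k B A).toLinearMap
    ∘ₗ (TensorProduct.assoc k B A X).symm.toLinearMap
    ∘ₗ LinearMap.lTensor B coact
    ∘ₗ LinearMap.rTensor X (SB' ∘ₗ SB')

/-- The left `B`-coaction `x ↦ Σᵢ S_B²(bᵢ) ⊗ (aᵢ · x)` of the functor `Ω`. -/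
def omegaCoact {n : ℕ} (b : Fin n → B) (a : Fin n → A) (act : A ⊗[k] X →ₗ[k] X) :
    X →ₗ[k] B ⊗[k] X :=
  ∑ i, (TensorProduct.mk k B X
      (HopfAlgebra.antipode (R := k) (HopfAlgebra.antipode (R := k) (b i))))
    ∘ₗ act ∘ₗ TensorProduct.mk k A X (a i)

/-!
Write `L : A → End X` for the action and `⋆` for convolution, with the coaction `δ` making linear
maps `A → End M` act on linear maps `X → M`. Then `θ = (L ∘ S) ⋆ id`, and `L ∘ S` is the convolution
inverse of `L`, so `L ⋆ θ = id`. The Yetter–Drinfel'd condition says that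
`δ(h·x) = h₍₁₎x₍₋₁₎S(h₍₃₎) ⊗ h₍₂₎·x₍₀₎`, i.e. that `δ` intertwines `L` with `λ * μ * ρ`, where `λ`,
`μ`, `ρ` are the actions on `A ⊗ X` by left multiplication, by `L`, and by right multiplication
through `S`. Hence `δ ∘ θ = (ρ ∘ S) ⋆ (μ ∘ S) ⋆ (λ ∘ S) ⋆ δ`: the factor `λ ∘ S` cancels the
coaction, `μ ∘ S` produces `θ`, and `ρ ∘ S` produces `S²`. The same factorisation gives
`θ(h·x) = S²(h)·θ(x)`, after which `L ⋆ θ = id` exhibits the inverse `x ↦ S⁻²(x₍₋₁₎)·x₍₀₎` of `θ`.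

The antipodes are adjoint, `ω(S a, b) = ω(a, S b)`, since `a ↦ ω(S a, -)` and `a ↦ ω(a, S -)` are
both convolution inverse to `a ↦ ω(a, -)`; this evaluates the two composites of `Ω`.
-/

section Convolution

open WithConv Coalgebra HopfAlgebra

variable {R H E : Type*} [CommSemiring R] [Semiring H] [HopfAlgebra R H]
  [Semiring E] [Algebra R E]

/-- An algebra map `φ : H → E`, regarded as an element of the convolution algebra of linear maps
`H → E`. -/
abbrev convOf (φ : H →ₐ[R] E) : WithConv (H →ₗ[R] E) := toConv φ.toLinearMap

/-- The map `φ ∘ S`, which is the convolution inverse of the algebra map `φ : H → E`. -/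
abbrev convInv (φ : H →ₐ[R] E) : WithConv (H →ₗ[R] E) := toConv (φ.toLinearMap ∘ₗ antipode R)

lemma convOf_mul_convInv (φ : H →ₐ[R] E) : convOf φ * convInv φ = 1 := by
  ext h
  simpa [(ℛ R h).convMul_apply] using congrArg φ (sum_mul_antipode_eq_algebraMap_counit (ℛ R h))

lemma convInv_mul_convOf (φ : H →ₐ[R] E) : convInv φ * convOf φ = 1 := by
  ext h
  simpa [(ℛ R h).convMul_apply] using congrArg φ (sum_antipode_mul_eq_algebraMap_counit (ℛ R h))

/-- The convolution product of two algebra maps with commuting images, as an algebra map. -/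
def convMulAlgHom (φ ψ : H →ₐ[R] E) (hφψ : ∀ g h, Commute (φ g) (ψ h)) : H →ₐ[R] E :=
  (Algebra.TensorProduct.lift φ ψ hφψ).comp (Bialgebra.comulAlgHom R H)

lemma convMulAlgHom_apply (φ ψ : H →ₐ[R] E) (hφψ : ∀ g h, Commute (φ g) (ψ h)) {ι : Type*}
    {h : H} (𝓡 : Repr R h ι) :
    convMulAlgHom φ ψ hφψ h = ∑ i ∈ 𝓡.index, φ (𝓡.left i) * ψ (𝓡.right i) := by
  simp [convMulAlgHom, ← 𝓡.eq]

lemma convOf_convMulAlgHom (φ ψ : H →ₐ[R] E) (hφψ : ∀ g h, Commute (φ g) (ψ h)) :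
    convOf (convMulAlgHom φ ψ hφψ) = convOf φ * convOf ψ := by
  ext h
  exact (convMulAlgHom_apply φ ψ hφψ (ℛ R h)).trans
    ((ℛ R h).convMul_apply (convOf φ) (convOf ψ)).symm

lemma convInv_convMulAlgHom (φ ψ : H →ₐ[R] E) (hφψ : ∀ g h, Commute (φ g) (ψ h)) :
    convInv (convMulAlgHom φ ψ hφψ) = convInv ψ * convInv φ := by
  refine left_inv_eq_right_inv (convInv_mul_convOf _) ?_
  calc convOf (convMulAlgHom φ ψ hφψ) * (convInv ψ * convInv φ)
      = convOf φ * (convOf ψ * convInv ψ) * convInv φ := by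
        rw [convOf_convMulAlgHom]; simp only [mul_assoc]
    _ = 1 := by rw [convOf_mul_convInv, mul_one, convOf_mul_convInv]

lemma commute_convMulAlgHom {φ ψ : H →ₐ[R] E} (hφψ : ∀ g h, Commute (φ g) (ψ h)) {e : E}
    (hφ : ∀ h, Commute (φ h) e) (hψ : ∀ h, Commute (ψ h) e) (h : H) :
    Commute (convMulAlgHom φ ψ hφψ h) e := by
  rw [convMulAlgHom_apply φ ψ hφψ (ℛ R h)]
  exact Commute.sum_left _ _ _ fun i _ ↦ (hφ _).mul_left (hψ _)

end Convolution

section ConvolutionAction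

open WithConv Coalgebra

variable {R C V M N : Type*} [CommSemiring R] [AddCommMonoid C] [Module R C]
  [AddCommMonoid V] [Module R V] [AddCommMonoid M] [Module R M] [AddCommMonoid N] [Module R N]

/-- The action `(f ⋆ g)(v) = f(v₍₋₁₎)(g(v₍₀₎))` of the convolution algebra of linear maps
`C → End M` on the linear maps `V → M`, for a coaction `V → C ⊗ V`. -/
def coactConv (coact : V →ₗ[R] C ⊗[R] V) (f : WithConv (C →ₗ[R] Module.End R M))
    (g : V →ₗ[R] M) : V →ₗ[R] M :=
  TensorProduct.lift f.ofConv ∘ₗ LinearMap.lTensor C g ∘ₗ coact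

lemma comp_coactConv (coact : V →ₗ[R] C ⊗[R] V) {f : WithConv (C →ₗ[R] Module.End R M)}
    {f' : WithConv (C →ₗ[R] Module.End R N)} {u : M →ₗ[R] N}
    (hu : ∀ c, u ∘ₗ f.ofConv c = f'.ofConv c ∘ₗ u) (g : V →ₗ[R] M) :
    u ∘ₗ coactConv coact f g = coactConv coact f' (u ∘ₗ g) := by
  have h : u ∘ₗ TensorProduct.lift f.ofConv ∘ₗ LinearMap.lTensor C g =
      TensorProduct.lift f'.ofConv ∘ₗ LinearMap.lTensor C (u ∘ₗ g) := by
    ext c v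
    exact LinearMap.congr_fun (hu c) (g v)
  simp only [coactConv, ← LinearMap.comp_assoc] at h ⊢
  rw [h]

variable [Coalgebra R C]

lemma one_coactConv {coact : V →ₗ[R] C ⊗[R] V}
    (hcounit : (TensorProduct.lid R V).toLinearMap ∘ₗ LinearMap.rTensor V counit ∘ₗ coact =
      LinearMap.id) (g : V →ₗ[R] M) :
    coactConv coact 1 g = g := by
  have h : TensorProduct.lift (1 : WithConv (C →ₗ[R] Module.End R M)).ofConv ∘ₗ
      LinearMap.lTensor C g =
      g ∘ₗ (TensorProduct.lid R V).toLinearMap ∘ₗ LinearMap.rTensor V counit := by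
    ext c v
    simp
  rw [coactConv, ← LinearMap.comp_assoc, h]
  simp only [LinearMap.comp_assoc, hcounit, LinearMap.comp_id]

lemma mul_coactConv {coact : V →ₗ[R] C ⊗[R] V}
    (hcoassoc : (TensorProduct.assoc R C C V).toLinearMap ∘ₗ LinearMap.rTensor V comul ∘ₗ coact =
      LinearMap.lTensor C coact ∘ₗ coact)
    (f f' : WithConv (C →ₗ[R] Module.End R M)) (g : V →ₗ[R] M) :
    coactConv coact (f * f') g = coactConv coact f (coactConv coact f' g) := by
  have h : TensorProduct.lift (f * f').ofConv ∘ₗ LinearMap.lTensor C g =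
      TensorProduct.lift f.ofConv ∘ₗ
        LinearMap.lTensor C (TensorProduct.lift f'.ofConv ∘ₗ LinearMap.lTensor C g) ∘ₗ
        (TensorProduct.assoc R C C V).toLinearMap ∘ₗ LinearMap.rTensor V comul := by
    ext c v
    have hmul : (f * f').ofConv c = _ := (ℛ R c).convMul_apply f f'
    simp [hmul, ← (ℛ R c).eq, TensorProduct.sum_tmul, map_sum]
  rw [coactConv, ← LinearMap.comp_assoc, h]
  simp only [LinearMap.comp_assoc, hcoassoc]
  simp only [coactConv, LinearMap.lTensor_comp, LinearMap.comp_assoc]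

lemma map_convMul_apply {f g : WithConv (C →ₗ[R] Module.End R M)}
    {f' g' : WithConv (C →ₗ[R] Module.End R N)} {u : M →ₗ[R] N} {m : M} {n : N}
    (hf : ∀ c m, u (f.ofConv c m) = f'.ofConv c (u m))
    (hg : ∀ c, u (g.ofConv c m) = g'.ofConv c n) (c : C) :
    u ((f * g).ofConv c m) = (f' * g').ofConv c n := by
  have hfg : (f * g).ofConv c = _ := (ℛ R c).convMul_apply f g
  have hfg' : (f' * g').ofConv c = _ := (ℛ R c).convMul_apply f' g'
  simp only [hfg, hfg', LinearMap.sum_apply, map_sum, Module.End.mul_apply, hf, hg]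

end ConvolutionAction

section YetterDrinfeld

open WithConv Coalgebra HopfAlgebra

/-- The action `c ↦ (y ⊗ x ↦ c y ⊗ x)` of `A` on `A ⊗ X` by left multiplication. -/
def mulLeftHom : A →ₐ[k] Module.End k (A ⊗[k] X) :=
  (Module.End.rTensorAlgHom k A X).comp (Algebra.lmul k A)

/-- The action `c ↦ (y ⊗ x ↦ y S(c) ⊗ x)` of `A` on `A ⊗ X`; the antipode turns right
multiplication into a left action. -/
def mulRightAntipodeHom : A →ₐ[k] Module.End k (A ⊗[k] X) :=
  ((Module.End.rTensorAlgHom k A X).comp (Algebra.lsmul k k A)).comp (antipodeAlgHomOp k A)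

@[simp]
lemma mulLeftHom_tmul (c y : A) (x : X) : mulLeftHom (k := k) c (y ⊗ₜ[k] x) = (c * y) ⊗ₜ x := rfl

@[simp]
lemma mulRightAntipodeHom_apply (c : A) :
    mulRightAntipodeHom (X := X) c = LinearMap.rTensor X (LinearMap.mulRight k (antipode k c)) :=
  rfl

lemma coactConv_mulLeftHom_mk_one (coact : X →ₗ[k] A ⊗[k] X) :
    coactConv coact (convOf mulLeftHom) (TensorProduct.mk k A X 1) = coact := by
  have h : TensorProduct.lift mulLeftHom.toLinearMap ∘ₗ
      LinearMap.lTensor A (TensorProduct.mk k A X 1) = LinearMap.id := by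
    ext c x
    simp
  rw [coactConv, ← LinearMap.comp_assoc, h, LinearMap.id_comp]

/-- The extension `y ⊗ x ↦ x₍₋₁₎ y ⊗ x₍₀₎` of a coaction to `A ⊗ X`, i.e. the braiding `c_{X,A}`,
for the regular action on `A`, precomposed with the flip. -/
def coactExt (coact : X →ₗ[k] A ⊗[k] X) : Module.End k (A ⊗[k] X) :=
  ydBraid coact (LinearMap.mul' k A) ∘ₗ (TensorProduct.comm k A X).toLinearMap

lemma coactExt_tmul (coact : X →ₗ[k] A ⊗[k] X) (y : A) (x : X) :
    coactExt coact (y ⊗ₜ x) = LinearMap.rTensor X (LinearMap.mulRight k y) (coact x) := by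
  simp only [coactExt, ydBraid, LinearMap.comp_apply, LinearEquiv.coe_coe,
    TensorProduct.comm_tmul, LinearMap.rTensor_tmul]
  induction coact x using TensorProduct.induction_on with
  | zero => simp
  | tmul a z => simp
  | add s t hs ht => simp only [TensorProduct.add_tmul, map_add, hs, ht]

lemma ydR_tmul (act : A ⊗[k] X →ₗ[k] X) (coact : X →ₗ[k] A ⊗[k] X) {ι : Type*} {h : A}
    (𝓡 : Repr k h ι) (x : X) :
    ydR act coact (h ⊗ₜ x) = ∑ i ∈ 𝓡.index,
      LinearMap.rTensor X (LinearMap.mulRight k (𝓡.right i)) (coact (act (𝓡.left i ⊗ₜ x))) := by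
  simp only [ydR, LinearMap.comp_apply, LinearMap.rTensor_tmul, ← 𝓡.eq, TensorProduct.sum_tmul,
    map_sum, LinearEquiv.coe_coe, TensorProduct.assoc_tmul, LinearMap.lTensor_tmul,
    TensorProduct.comm_tmul, TensorProduct.assoc_symm_tmul]
  refine Finset.sum_congr rfl fun i _ ↦ ?_
  induction coact (act (𝓡.left i ⊗ₜ x)) using TensorProduct.induction_on with
  | zero => simp
  | tmul a z => simp
  | add s t hs ht => simp only [TensorProduct.add_tmul, map_add, hs, ht]

namespace IsYD

variable {act : A ⊗[k] X →ₗ[k] X} {coact : X →ₗ[k] A ⊗[k] X}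

/-- The action of a Yetter–Drinfel'd module as an algebra map `A → End X`. -/
def actHom (hX : IsYD act coact) : A →ₐ[k] Module.End k X :=
  AlgHom.ofLinearMap (TensorProduct.curry act) (LinearMap.ext hX.act_one)
    fun a a' ↦ LinearMap.ext (hX.act_mul a a')

@[simp]
lemma actHom_apply (hX : IsYD act coact) (h : A) (x : X) : hX.actHom h x = act (h ⊗ₜ x) := rfl

/-- The action `h ↦ (y ⊗ x ↦ y ⊗ h·x)` of `A` on `A ⊗ X` through the second factor. -/
def lTensorActHom (hX : IsYD act coact) : A →ₐ[k] Module.End k (A ⊗[k] X) :=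
  (Module.End.lTensorAlgHom k X A).comp hX.actHom

@[simp]
lemma lTensorActHom_tmul (hX : IsYD act coact) (h y : A) (x : X) :
    hX.lTensorActHom h (y ⊗ₜ x) = y ⊗ₜ act (h ⊗ₜ x) := rfl

lemma commute_mulLeftHom_lTensorActHom (hX : IsYD act coact) (g h : A) :
    Commute (mulLeftHom g) (hX.lTensorActHom h) :=
  TensorProduct.ext' fun _ _ ↦ rfl

/-- The diagonal action `h ↦ (y ⊗ x ↦ h₍₁₎ y ⊗ h₍₂₎·x)` of `A` on `A ⊗ X`. -/
def diagHom (hX : IsYD act coact) : A →ₐ[k] Module.End k (A ⊗[k] X) :=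
  convMulAlgHom mulLeftHom hX.lTensorActHom hX.commute_mulLeftHom_lTensorActHom

lemma commute_diagHom_rTensor_mulRight (hX : IsYD act coact) (h y : A) :
    Commute (hX.diagHom h) (LinearMap.rTensor X (LinearMap.mulRight k y)) :=
  commute_convMulAlgHom _ (fun _ ↦ TensorProduct.ext' fun _ _ ↦ by simp [mul_assoc])
    (fun _ ↦ TensorProduct.ext' fun _ _ ↦ rfl) h

/-- The action `h ↦ (y ⊗ x ↦ h₍₁₎ y S(h₍₃₎) ⊗ h₍₂₎·x)` of `A` on `A ⊗ X`, for which the coaction of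
a Yetter–Drinfel'd module is `A`-linear. -/
def adjHom (hX : IsYD act coact) : A →ₐ[k] Module.End k (A ⊗[k] X) :=
  convMulAlgHom hX.diagHom mulRightAntipodeHom fun g h ↦
    hX.commute_diagHom_rTensor_mulRight g (antipode k h)

lemma convOf_adjHom (hX : IsYD act coact) :
    convOf hX.adjHom = convOf hX.diagHom * convOf mulRightAntipodeHom :=
  convOf_convMulAlgHom _ _ _

lemma ydL_tmul (hX : IsYD act coact) (h : A) (x : X) :
    ydL act coact (h ⊗ₜ x) = hX.diagHom h (coact x) := by
  simp only [ydL, diagHom, convMulAlgHom_apply _ _ _ (ℛ k h), LinearMap.comp_apply,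
    TensorProduct.map_tmul]
  conv_lhs => rw [← (ℛ k h).eq]
  induction coact x using TensorProduct.induction_on with
  | zero => simp
  | tmul a z => simp [TensorProduct.sum_tmul]
  | add s t hs ht => simp only [TensorProduct.tmul_add, map_add, hs, ht]

lemma coactExt_convMul (hX : IsYD act coact) (h : A) (t : A ⊗[k] X) :
    coactExt coact ((convOf hX.lTensorActHom * convOf mulLeftHom).ofConv h t) =
      hX.diagHom h (coactExt coact t) := by
  suffices htmul : coactExt coact ∘ₗ (convOf hX.lTensorActHom * convOf mulLeftHom).ofConv h =
      hX.diagHom h ∘ₗ coactExt coact from LinearMap.congr_fun htmul t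
  refine TensorProduct.ext' fun y x ↦ ?_
  have hmul : (convOf hX.lTensorActHom * convOf mulLeftHom).ofConv h = _ :=
    (ℛ k h).convMul_apply (convOf hX.lTensorActHom) (convOf mulLeftHom)
  have hydR : coactExt coact ((convOf hX.lTensorActHom * convOf mulLeftHom).ofConv h (y ⊗ₜ x)) =
      LinearMap.rTensor X (LinearMap.mulRight k y) (ydR act coact (h ⊗ₜ x)) := by
    simp [hmul, coactExt_tmul, ydR_tmul _ _ (ℛ k h), LinearMap.sum_apply, LinearMap.mulRight_mul,
      LinearMap.rTensor_comp]
  -- The case `y = 1` is the Yetter–Drinfel'd condition, whose two sides commute with `· * y`.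
  rw [LinearMap.comp_apply, hydR, ← hX.yd, ydL_tmul, LinearMap.comp_apply, coactExt_tmul]
  exact (LinearMap.congr_fun (hX.commute_diagHom_rTensor_mulRight h y) (coact x)).symm

lemma coact_act (hX : IsYD act coact) (h : A) (x : X) :
    coact (act (h ⊗ₜ x)) = hX.adjHom h (coact x) := by
  have hone (z : X) : coactExt coact (1 ⊗ₜ z) = coact z := by simp [coactExt_tmul]
  have hconv : convOf hX.lTensorActHom * convOf mulLeftHom * convInv mulLeftHom =
      convOf hX.lTensorActHom := by
    rw [mul_assoc, convOf_mul_convInv, mul_one]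
  have hright (c : A) : coactExt coact ((convInv mulLeftHom).ofConv c (1 ⊗ₜ x)) =
      (convOf mulRightAntipodeHom).ofConv c (coact x) := by
    simp [coactExt_tmul]
  have hadj := map_convMul_apply (f' := convOf hX.diagHom) hX.coactExt_convMul hright h
  rw [hconv, ← convOf_adjHom] at hadj
  exact (hone _).symm.trans hadj

lemma ydTheta_eq_coactConv (hX : IsYD act coact) :
    ydTheta act coact = coactConv coact (convInv hX.actHom) LinearMap.id := by
  have h : TensorProduct.lift (hX.actHom.toLinearMap ∘ₗ antipode k) =
      act ∘ₗ LinearMap.rTensor X (antipode k) := by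
    ext c x
    simp
  rw [ydTheta, coactConv, ofConv_toConv, h, LinearMap.lTensor_id]
  rfl

lemma ydTheta_act (hX : IsYD act coact) (h : A) (x : X) :
    ydTheta act coact (act (h ⊗ₜ x)) =
      act (antipode k (antipode k h) ⊗ₜ ydTheta act coact x) := by
  let actS : A ⊗[k] X →ₗ[k] X := act ∘ₗ LinearMap.rTensor X (antipode k)
  have hdiag (c : A) (t : A ⊗[k] X) : actS ((convOf hX.diagHom).ofConv c t) =
      (1 : WithConv (A →ₗ[k] Module.End k X)).ofConv c (actS t) := by
    induction t using TensorProduct.induction_on with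
    | zero => simp
    | add s t hs ht => simp only [map_add, hs, ht]
    | tmul y x =>
      have hS := congrArg (fun a ↦ act ((antipode k y * a) ⊗ₜ x))
        (sum_antipode_mul_eq_algebraMap_counit (ℛ k c))
      simpa [actS, diagHom, convMulAlgHom_apply _ _ _ (ℛ k c), antipode_mul_antidistrib, hX.act_mul,
        Finset.mul_sum, TensorProduct.sum_tmul, Algebra.algebraMap_eq_smul_one,
        ← TensorProduct.smul_tmul', hX.act_one] using hS
  have hright (c : A) (t : A ⊗[k] X) : actS ((convOf mulRightAntipodeHom).ofConv c t) =
      hX.actHom (antipode k (antipode k c)) (actS t) := by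
    induction t using TensorProduct.induction_on with
    | zero => simp
    | add s t hs ht => simp only [map_add, hs, ht]
    | tmul y x => simp [actS, antipode_mul_antidistrib, hX.act_mul]
  calc ydTheta act coact (act (h ⊗ₜ x))
      = actS (hX.adjHom h (coact x)) := by rw [← hX.coact_act]; rfl
    _ = actS ((convOf hX.diagHom * convOf mulRightAntipodeHom).ofConv h (coact x)) := by
        rw [← convOf_adjHom]; rfl
    _ = (1 * toConv (hX.actHom.toLinearMap ∘ₗ antipode k ∘ₗ antipode k)).ofConv h
          (actS (coact x)) := map_convMul_apply hdiag (hright · (coact x)) h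
    _ = act (antipode k (antipode k h) ⊗ₜ ydTheta act coact x) := by rw [one_mul]; rfl

lemma coact_comp_ydTheta (hX : IsYD act coact) :
    coact ∘ₗ ydTheta act coact = LinearMap.lTensor A (ydTheta act coact) ∘ₗ
      LinearMap.rTensor X (antipode k ∘ₗ antipode k) ∘ₗ coact := by
  have hone : coactConv coact (convInv mulLeftHom) coact = TensorProduct.mk k A X 1 := by
    conv_lhs => enter [3]; rw [← coactConv_mulLeftHom_mk_one coact]
    rw [← mul_coactConv hX.coassoc, convInv_mul_convOf, one_coactConv hX.counit_coact]
  have hright : TensorProduct.lift (convInv (mulRightAntipodeHom (k := k) (X := X))).ofConv ∘ₗ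
      LinearMap.lTensor A (TensorProduct.mk k A X 1 ∘ₗ ydTheta act coact) =
      LinearMap.lTensor A (ydTheta act coact) ∘ₗ
        LinearMap.rTensor X (antipode k ∘ₗ antipode k) := by
    ext c x
    simp
  calc coact ∘ₗ ydTheta act coact
      = coactConv coact (convInv hX.adjHom) coact := by
        rw [hX.ydTheta_eq_coactConv, comp_coactConv, LinearMap.comp_id]
        exact fun c ↦ LinearMap.ext (hX.coact_act (antipode k c))
    _ = coactConv coact (convInv mulRightAntipodeHom) (coactConv coact
          (convInv hX.lTensorActHom) (coactConv coact (convInv mulLeftHom) coact)) := by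
        simp only [adjHom, diagHom, convInv_convMulAlgHom, mul_coactConv hX.coassoc]
    _ = coactConv coact (convInv mulRightAntipodeHom)
          (TensorProduct.mk k A X 1 ∘ₗ ydTheta act coact) := by
        rw [hone, hX.ydTheta_eq_coactConv, comp_coactConv, LinearMap.comp_id]
        exact fun c ↦ rfl
    _ = LinearMap.lTensor A (ydTheta act coact) ∘ₗ
          LinearMap.rTensor X (antipode k ∘ₗ antipode k) ∘ₗ coact := by
        rw [coactConv, ← LinearMap.comp_assoc, hright, LinearMap.comp_assoc]

lemma act_comp_lTensor_ydTheta_comp_coact (hX : IsYD act coact) :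
    act ∘ₗ LinearMap.lTensor A (ydTheta act coact) ∘ₗ coact = LinearMap.id := by
  have hact : TensorProduct.lift (convOf hX.actHom).ofConv = act := by
    ext c x
    simp
  calc act ∘ₗ LinearMap.lTensor A (ydTheta act coact) ∘ₗ coact
      = coactConv coact (convOf hX.actHom) (ydTheta act coact) := by rw [coactConv, hact]
    _ = LinearMap.id := by
      rw [hX.ydTheta_eq_coactConv, ← mul_coactConv hX.coassoc, convOf_mul_convInv,
        one_coactConv hX.counit_coact]

lemma ydTheta_comp_act (hX : IsYD act coact) {S' : A →ₗ[k] A}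
    (hSS' : ∀ c, antipode k (S' c) = c) :
    ydTheta act coact ∘ₗ act ∘ₗ LinearMap.rTensor X (S' ∘ₗ S') =
      act ∘ₗ LinearMap.lTensor A (ydTheta act coact) := by
  ext c x
  simp [hX.ydTheta_act, hSS']

lemma ydTheta_bijective (hX : IsYD act coact) {S' : A →ₗ[k] A}
    (hS'S : ∀ c, S' (antipode k c) = c) (hSS' : ∀ c, antipode k (S' c) = c) :
    Function.Bijective (ydTheta act coact) := by
  have hcancel : LinearMap.rTensor X (S' ∘ₗ S') ∘ₗ LinearMap.lTensor A (ydTheta act coact) ∘ₗ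
      LinearMap.rTensor X (antipode k ∘ₗ antipode k) = LinearMap.lTensor A (ydTheta act coact) := by
    ext c x
    simp [hS'S]
  have hact (x : X) := LinearMap.congr_fun hX.act_comp_lTensor_ydTheta_comp_coact x
  refine Function.bijective_iff_has_inverse.mpr
    ⟨act ∘ₗ LinearMap.rTensor X (S' ∘ₗ S') ∘ₗ coact, fun x ↦ ?_, fun x ↦ ?_⟩
  · have hcolinear := LinearMap.congr_fun hX.coact_comp_ydTheta x
    have hcancel_coact := LinearMap.congr_fun hcancel (coact x)
    simp only [LinearMap.comp_apply] at hact hcolinear hcancel_coact ⊢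
    rw [hcolinear, hcancel_coact, hact, LinearMap.id_apply]
  · exact (LinearMap.congr_fun (hX.ydTheta_comp_act hSS') (coact x)).trans (hact x)

end IsYD

end YetterDrinfeld

section HopfPairing

open WithConv Coalgebra HopfAlgebra

namespace IsHopfPairing

variable {ω : A →ₗ[k] B →ₗ[k] k}

/-- A Hopf pairing as an algebra map `a ↦ ω(a, -)` from `A` to the convolution algebra of
linear maps `B → k`. The multiplication is opposite because `ω(aa', b) = ω(a', b₍₁₎) ω(a, b₍₂₎)`. -/
def convHom (hω : IsHopfPairing ω) : A →ₐ[k] (WithConv (B →ₗ[k] k))ᵐᵒᵖ :=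
  AlgHom.ofLinearMap
    ((MulOpposite.opLinearEquiv k).toLinearMap ∘ₗ (WithConv.linearEquiv k _).symm.toLinearMap ∘ₗ ω)
    (congrArg MulOpposite.op <| WithConv.ext <| LinearMap.ext hω.one_left)
    fun a a' ↦ congrArg MulOpposite.op <| WithConv.ext <| LinearMap.ext (hω.mul_left a a')

@[simp]
lemma unop_convHom_ofConv (hω : IsHopfPairing ω) (a : A) (b : B) :
    (hω.convHom a).unop.ofConv b = ω a b := rfl

lemma sum_antipode_mul (hω : IsHopfPairing ω) {ι κ : Type*} {a : A} {b : B} (𝓡 : Repr k a ι)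
    (𝓢 : Repr k b κ) :
    ∑ i ∈ 𝓡.index, ∑ j ∈ 𝓢.index,
      ω (𝓡.right i) (antipode k (𝓢.left j)) * ω (𝓡.left i) (𝓢.right j) =
      counit (R := k) a * counit (R := k) b := by
  rw [Finset.sum_comm]
  calc ∑ j ∈ 𝓢.index, ∑ i ∈ 𝓡.index,
        ω (𝓡.right i) (antipode k (𝓢.left j)) * ω (𝓡.left i) (𝓢.right j)
      = ω a (∑ j ∈ 𝓢.index, antipode k (𝓢.left j) * 𝓢.right j) := by
        simp [hω.mul_right, ← 𝓡.eq, mul_comm]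
    _ = counit a * counit b := by
        rw [sum_antipode_mul_eq_algebraMap_counit, Algebra.algebraMap_eq_smul_one, map_smul,
          hω.one_right, smul_eq_mul, mul_comm]

lemma apply_antipode (hω : IsHopfPairing ω) (a : A) (b : B) :
    ω (antipode k a) b = ω a (antipode k b) := by
  let ωS : WithConv (A →ₗ[k] (WithConv (B →ₗ[k] k))ᵐᵒᵖ) :=
    toConv ((MulOpposite.opLinearEquiv k).toLinearMap ∘ₗ
      (WithConv.linearEquiv k _).symm.toLinearMap ∘ₗ ω.compl₂ (antipode k))
  have hωS : convOf hω.convHom * ωS = 1 := by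
    ext c
    apply MulOpposite.unop_injective
    ext y
    have hmul : (convOf hω.convHom * ωS).ofConv c = _ :=
      (ℛ k c).convMul_apply (convOf hω.convHom) ωS
    rw [hmul]
    simpa [ωS, (ℛ k y).convMul_apply] using hω.sum_antipode_mul (ℛ k c) (ℛ k y)
  have hS : convInv hω.convHom = ωS := left_inv_eq_right_inv (convInv_mul_convOf _) hωS
  exact congrArg (fun f ↦ (f.ofConv a).unop.ofConv b) hS

end IsHopfPairing

lemma omegaAct_tmul (ω : A →ₗ[k] B →ₗ[k] k) (T : B →ₗ[k] B) (coact : X →ₗ[k] A ⊗[k] X) (y : B)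
    (x : X) :
    omegaAct ω T coact (y ⊗ₜ x) =
      TensorProduct.lid k X (LinearMap.rTensor X (ω.flip (T (T y))) (coact x)) := by
  simp only [omegaAct, LinearMap.comp_apply, LinearMap.rTensor_tmul, LinearMap.lTensor_tmul,
    LinearEquiv.coe_coe]
  induction coact x using TensorProduct.induction_on with
  | zero => simp
  | tmul a z => simp
  | add s t hs ht => simp only [TensorProduct.tmul_add, map_add, hs, ht]

lemma omegaCoact_apply {n : ℕ} (b : Fin n → B) (a : Fin n → A) (act : A ⊗[k] X →ₗ[k] X) (x : X) :
    omegaCoact b a act x = ∑ i, antipode k (antipode k (b i)) ⊗ₜ act (a i ⊗ₜ x) := by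
  simp [omegaCoact, LinearMap.sum_apply]

section OmegaSquare

variable {ω : A →ₗ[k] B →ₗ[k] k} {n : ℕ} {b : Fin n → B} {a : Fin n → A} {SA' : A →ₗ[k] A}
  {SB' : B →ₗ[k] B}

lemma omegaAct_omegaCoact (hω : IsHopfPairing ω) (hcop : ∀ c : A, ∑ i, ω c (b i) • a i = c)
    (hSA : ∀ c, antipode k (SA' c) = c) (hSB : ∀ y, SB' (antipode k y) = y)
    {ωminus : B →ₗ[k] A →ₗ[k] k} (hminus : ∀ (y : B) (c : A), ωminus y c = ω (SA' c) (SB' y))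
    (act : A ⊗[k] X →ₗ[k] X) :
    omegaAct ωminus SA' (omegaCoact b a act) = act ∘ₗ LinearMap.rTensor X (SA' ∘ₗ SA') := by
  refine TensorProduct.ext' fun c x ↦ ?_
  have hpair (i : Fin n) :
      ωminus (antipode k (antipode k (b i))) (SA' (SA' c)) = ω (SA' (SA' c)) (b i) := by
    rw [hminus, hSB, ← hω.apply_antipode, hSA]
  calc omegaAct ωminus SA' (omegaCoact b a act) (c ⊗ₜ x)
      = ∑ i, ω (SA' (SA' c)) (b i) • act (a i ⊗ₜ x) := by
        simp [omegaAct_tmul, omegaCoact_apply, hpair]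
    _ = act ((∑ i, ω (SA' (SA' c)) (b i) • a i) ⊗ₜ x) := by
        simp [TensorProduct.sum_tmul, ← TensorProduct.smul_tmul']
    _ = act (SA' (SA' c) ⊗ₜ x) := by rw [hcop]

lemma omegaCoact_omegaAct (hω : IsHopfPairing ω) (hcop : ∀ c : A, ∑ i, ω c (b i) • a i = c)
    (hSA : ∀ c, antipode k (SA' c) = c) (hS'SB : ∀ y, SB' (antipode k y) = y)
    (hSS'B : ∀ y, antipode k (SB' y) = y) (coact : X →ₗ[k] A ⊗[k] X) :
    omegaCoact (fun i ↦ antipode k (a i)) (fun i ↦ antipode k (b i)) (omegaAct ω SB' coact) =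
      LinearMap.rTensor X (antipode k ∘ₗ antipode k) ∘ₗ coact := by
  ext x
  have hpair (c : A) (i : Fin n) : ω c (SB' (SB' (antipode k (b i)))) = ω (SA' c) (b i) := by
    rw [hS'SB, ← hSA c, hω.apply_antipode, hSS'B, hSA]
  simp only [omegaCoact_apply, omegaAct_tmul, LinearMap.comp_apply]
  induction coact x using TensorProduct.induction_on with
  | zero => simp
  | add s t hs ht => simp only [map_add, TensorProduct.tmul_add, Finset.sum_add_distrib, hs, ht]
  | tmul c z =>
    calc ∑ i, antipode k (antipode k (antipode k (a i))) ⊗ₜ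
          TensorProduct.lid k X (LinearMap.rTensor X
            (ω.flip (SB' (SB' (antipode k (b i))))) (c ⊗ₜ z))
        = antipode k (antipode k (antipode k (∑ i, ω (SA' c) (b i) • a i))) ⊗ₜ z := by
          simp [hpair, TensorProduct.sum_tmul, TensorProduct.smul_tmul]
      _ = antipode k (antipode k c) ⊗ₜ z := by rw [hcop, hSA]

end OmegaSquare

end HopfPairing


theorem omega_square_general (ω : A →ₗ[k] B →ₗ[k] k) (hω : IsHopfPairing ω)
    {n : ℕ} (b : Fin n → B) (a : Fin n → A) (hcop : ∀ x : A, ∑ i, ω x (b i) • a i = x)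
    (SA' : A →ₗ[k] A) (SB' : B →ₗ[k] B)
    (hSA : SA' ∘ₗ HopfAlgebra.antipode (R := k) = LinearMap.id ∧
      HopfAlgebra.antipode (R := k) ∘ₗ SA' = LinearMap.id)
    (hSB : SB' ∘ₗ HopfAlgebra.antipode (R := k) = LinearMap.id ∧
      HopfAlgebra.antipode (R := k) ∘ₗ SB' = LinearMap.id)
    (ωminus : B →ₗ[k] A →ₗ[k] k)
    (hminus : ∀ (y : B) (x : A), ωminus y x = ω (SA' x) (SB' y))
    (actX : A ⊗[k] X →ₗ[k] X) (coactX : X →ₗ[k] A ⊗[k] X) (hX : IsYD actX coactX) :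
    omegaAct ωminus SA' (omegaCoact b a actX)
        = actX ∘ₗ LinearMap.rTensor X (SA' ∘ₗ SA')
    ∧ omegaCoact (fun i => HopfAlgebra.antipode (R := k) (a i))
          (fun i => HopfAlgebra.antipode (R := k) (b i))
          (omegaAct ω SB' coactX)
        = LinearMap.rTensor X
            ((HopfAlgebra.antipode (R := k) (A := A)) ∘ₗ HopfAlgebra.antipode (R := k))
          ∘ₗ coactX
    ∧ Function.Bijective (ydTheta actX coactX)
    ∧ ydTheta actX coactX ∘ₗ (actX ∘ₗ LinearMap.rTensor X (SA' ∘ₗ SA'))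
        = actX ∘ₗ LinearMap.lTensor A (ydTheta actX coactX)
    ∧ coactX ∘ₗ ydTheta actX coactX
        = LinearMap.lTensor A (ydTheta actX coactX)
          ∘ₗ (LinearMap.rTensor X
              ((HopfAlgebra.antipode (R := k) (A := A)) ∘ₗ HopfAlgebra.antipode (R := k))
            ∘ₗ coactX) := by
  have hS'SA (c : A) : SA' (HopfAlgebra.antipode k c) = c := LinearMap.congr_fun hSA.1 c
  have hSS'A (c : A) : HopfAlgebra.antipode k (SA' c) = c := LinearMap.congr_fun hSA.2 c
  have hS'SB (y : B) : SB' (HopfAlgebra.antipode k y) = y := LinearMap.congr_fun hSB.1 y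
  have hSS'B (y : B) : HopfAlgebra.antipode k (SB' y) = y := LinearMap.congr_fun hSB.2 y
  exact ⟨omegaAct_omegaCoact hω hcop hSS'A hS'SB hminus actX,
    omegaCoact_omegaAct hω hcop hSS'A hS'SB hSS'B coactX,
    hX.ydTheta_bijective hS'SA hSS'A, hX.ydTheta_comp_act hSS'A, hX.coact_comp_ydTheta⟩

/-- Let `ω : A × B → k` be a non-degenerate Hopf pairing with
inverse copairing `Σᵢ bᵢ ⊗ aᵢ` and bijective antipodes, and let
`ω⁻(b, a) = ω(S_A⁻¹(a), S_B⁻¹(b))`, with inverse copairing `Σᵢ S_A(aᵢ) ⊗ S_B(bᵢ)`.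
For a left Yetter–Drinfel'd module `(X, ρ, δ)` over `A`, applying `Ω` for `ω` and then
the analogous construction for `ω⁻` yields the `A`-Yetter–Drinfel'd module
`(X, ρ ∘ (S_A⁻² ⊗ id), (S_A² ⊗ id) ∘ δ)`; moreover `θ_X(x) = S_A(x₍₋₁₎)·x₍₀₎` is a
bijection and an isomorphism of Yetter–Drinfel'd modules from this twisted module to
the original one. -/
theorem omega_square (ω : A →ₗ[k] B →ₗ[k] k) (hω : IsHopfPairing ω)
    {n : ℕ} (b : Fin n → B) (a : Fin n → A) (hcop : IsInverseCopairing ω b a)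
    (SA' : A →ₗ[k] A) (SB' : B →ₗ[k] B)
    (hSA : SA' ∘ₗ HopfAlgebra.antipode (R := k) = LinearMap.id ∧
      HopfAlgebra.antipode (R := k) ∘ₗ SA' = LinearMap.id)
    (hSB : SB' ∘ₗ HopfAlgebra.antipode (R := k) = LinearMap.id ∧
      HopfAlgebra.antipode (R := k) ∘ₗ SB' = LinearMap.id)
    (ωminus : B →ₗ[k] A →ₗ[k] k)
    (hminus : ∀ (y : B) (x : A), ωminus y x = ω (SA' x) (SB' y))
    (actX : A ⊗[k] X →ₗ[k] X) (coactX : X →ₗ[k] A ⊗[k] X) (hX : IsYD actX coactX) :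
    -- the composite action is the `S_A⁻²`-twist of the original action ...
    omegaAct ωminus SA' (omegaCoact b a actX)
        = actX ∘ₗ LinearMap.rTensor X (SA' ∘ₗ SA')
    -- ... and the composite coaction is the `S_A²`-twist of the original coaction
    ∧ omegaCoact (fun i => HopfAlgebra.antipode (R := k) (a i))
          (fun i => HopfAlgebra.antipode (R := k) (b i))
          (omegaAct ω SB' coactX)
        = LinearMap.rTensor X
            ((HopfAlgebra.antipode (R := k) (A := A)) ∘ₗ HopfAlgebra.antipode (R := k))
          ∘ₗ coactX
    -- `θ_X` is bijective ...
    ∧ Function.Bijective (ydTheta actX coactX)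
    -- ... `A`-linear from the twisted module to the original one ...
    ∧ ydTheta actX coactX ∘ₗ (actX ∘ₗ LinearMap.rTensor X (SA' ∘ₗ SA'))
        = actX ∘ₗ LinearMap.lTensor A (ydTheta actX coactX)
    -- ... and `A`-colinear from the twisted module to the original one
    ∧ coactX ∘ₗ ydTheta actX coactX
        = LinearMap.lTensor A (ydTheta actX coactX)
          ∘ₗ (LinearMap.rTensor X
              ((HopfAlgebra.antipode (R := k) (A := A)) ∘ₗ HopfAlgebra.antipode (R := k))
            ∘ₗ coactX) := by
  exact omega_square_general ω hω b a hcop.1 SA' SB' hSA hSB ωminus hminus actX coactX hX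

end Pairing

end
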